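/- Time-sharing (concatenation) for bidirectional broadcast codes: Let W₁ : A → S(H₁) and W₂ : A → S(H₂) be classical-quantum channels with a common finite input alphabet A. Given an (m, J₁, J₂) bidirectional broadcast code with average errors e₁ ≤ ε₁ and e₂ ≤ ε₁, and an (n, J₁′, J₂′) bidirectional broadcast code with average errors e₁ ≤ ε₂ and e₂ ≤ ε₂, there exists an (m+n, J₁·J₁′, J₂·J₂′) bidirectional broadcast code with average errors e₁ ≤ ε₁ + ε₂ and e₂ ≤ ε₁ + ε₂, obtained by concatenating codewords and tensoring the corresponding decoding operators. -/

import Mathlib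

open scoped BigOperators ComplexOrder

noncomputable section

/-- The Loewner order on operators: `A ≤ B` iff `B - A` is positive semidefinite. -/
def loewnerLE {ι : Type*} [Fintype ι] (A B : Matrix ι ι ℂ) : Prop := (B - A).PosSemidef

/-- A quantum state: a positive semidefinite operator with unit trace. -/
def IsState {ι : Type*} [Fintype ι] (ρ : Matrix ι ι ℂ) : Prop := ρ.PosSemidef ∧ ρ.trace = 1

/-- The von Neumann entropy `S(ρ) = −tr(ρ log₂ ρ)`, computed via eigenvalues. -/
noncomputable def vnEntropy {ι : Type*} [Fintype ι] [DecidableEq ι] (ρ : Matrix ι ι ℂ) : ℝ :=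
  if h : ρ.IsHermitian then -∑ i, h.eigenvalues i * Real.logb 2 (h.eigenvalues i) else 0

/-- The trace norm `‖A‖₁ = tr √(AᴴA)` (sum of singular values). -/
noncomputable def traceNorm {ι : Type*} [Fintype ι] [DecidableEq ι] (A : Matrix ι ι ℂ) : ℝ :=
  ∑ i, Real.sqrt ((Matrix.posSemidef_conjTranspose_mul_self A).1.eigenvalues i)

/-- A probability distribution on a finite set. -/
def IsDist {A : Type*} [Fintype A] (P : A → ℝ) : Prop := (∀ a, 0 ≤ P a) ∧ ∑ a, P a = 1

/-- The Holevo quantity `χ(P;W) = S(PW) − Σ_a P(a) S(W(a))`. -/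
noncomputable def holevo {A ι : Type*} [Fintype A] [Fintype ι] [DecidableEq ι]
    (P : A → ℝ) (W : A → Matrix ι ι ℂ) : ℝ :=
  vnEntropy (∑ a, (P a : ℂ) • W a) - ∑ a, P a * vnEntropy (W a)

/-- Tensor product `M 0 ⊗ ⋯ ⊗ M (n−1)` of matrices, realized on the index set `Fin n → ι`. -/
def tensorPow {n : ℕ} {ι : Type*} [Fintype ι] (M : Fin n → Matrix ι ι ℂ) :
    Matrix (Fin n → ι) (Fin n → ι) ℂ :=
  Matrix.of fun i j => ∏ k, M k (i k) (j k)

/-- The `n`-fold extension `W^{⊗n}(xⁿ) = W(x₁) ⊗ ⋯ ⊗ W(xₙ)` of a cq channel. -/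
def cqPow {A ι : Type*} [Fintype ι] (W : A → Matrix ι ι ℂ) (n : ℕ) (x : Fin n → A) :
    Matrix (Fin n → ι) (Fin n → ι) ℂ :=
  tensorPow fun k => W (x k)

/-- A POVM: positive semidefinite operators summing to at most the identity. -/
def IsPOVM {ι J : Type*} [Fintype ι] [DecidableEq ι] [Fintype J] (D : J → Matrix ι ι ℂ) : Prop :=
  (∀ j, (D j).PosSemidef) ∧ loewnerLE (∑ j, D j) 1

/-- Existence of an `(n, J₁, J₂)` bidirectional broadcast code for the cq channels `W₁`, `W₂`
with average errors `e₁ ≤ ε₁` and `e₂ ≤ ε₂`. -/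
def BroadcastCodeExists {A ι₁ ι₂ : Type*} [Fintype A] [Fintype ι₁] [DecidableEq ι₁]
    [Fintype ι₂] [DecidableEq ι₂]
    (W1 : A → Matrix ι₁ ι₁ ℂ) (W2 : A → Matrix ι₂ ι₂ ℂ)
    (n J1 J2 : ℕ) (ε₁ ε₂ : ℝ) : Prop :=
  ∃ (w : Fin J1 × Fin J2 → Fin n → A)
    (D1 : Fin J2 → Fin J1 → Matrix (Fin n → ι₁) (Fin n → ι₁) ℂ)
    (D2 : Fin J1 → Fin J2 → Matrix (Fin n → ι₂) (Fin n → ι₂) ℂ),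
    (∀ m2, IsPOVM (D1 m2)) ∧ (∀ m1, IsPOVM (D2 m1)) ∧
    (∀ m2, ((J1 : ℝ))⁻¹ * ∑ m1, ((1 - D1 m2 m1) * cqPow W1 n (w (m1, m2))).trace.re ≤ ε₁) ∧
    (∀ m1, ((J2 : ℝ))⁻¹ * ∑ m2, ((1 - D2 m1 m2) * cqPow W2 n (w (m1, m2))).trace.re ≤ ε₂)


/-- Existence of an `(n, J₁, J₂)` code for the cq multiple-access channel `W`
with average error at most `ε`. -/
def MACCodeExists {Y1 Y2 ι : Type*} [Fintype ι] [DecidableEq ι]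
    (W : Y1 → Y2 → Matrix ι ι ℂ) (n J1 J2 : ℕ) (ε : ℝ) : Prop :=
  ∃ (u : Fin J1 → Fin n → Y1) (v : Fin J2 → Fin n → Y2)
    (D : Fin J1 × Fin J2 → Matrix (Fin n → ι) (Fin n → ι) ℂ),
    IsPOVM D ∧
    (1 / ((J1 : ℝ) * (J2 : ℝ))) * ∑ m : Fin J1 × Fin J2,
      ((1 - D m) * tensorPow (fun k => W (u m.1 k) (v m.2 k))).trace.re ≤ ε

end
open scoped Kronecker MatrixOrder in
theorem ts_factor {ι : Type*} [Fintype ι] [DecidableEq ι] {M : Matrix ι ι ℂ}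
    (h : M.PosSemidef) : ∃ B : Matrix ι ι ℂ, M = B.conjTranspose * B := by
  obtain ⟨B, hB⟩ := CStarAlgebra.nonneg_iff_eq_star_mul_self.mp h.nonneg
  exact ⟨B, hB⟩

theorem ts_tr_mul_nonneg {ι : Type*} [Fintype ι] [DecidableEq ι] {M N : Matrix ι ι ℂ}
    (hM : M.PosSemidef) (hN : N.PosSemidef) : 0 ≤ (M * N).trace := by
  obtain ⟨B, rfl⟩ := ts_factor hM
  rw [Matrix.mul_assoc, Matrix.trace_mul_comm, Matrix.mul_assoc, ← Matrix.mul_assoc]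
  exact (hN.mul_mul_conjTranspose_same B).trace_nonneg

theorem ts_tensorPow_psd {n : ℕ} {ι : Type*} [Fintype ι] [DecidableEq ι]
    (M : Fin n → Matrix ι ι ℂ) (h : ∀ k, (M k).PosSemidef) : (tensorPow M).PosSemidef := by
  choose B hB using fun k => ts_factor (h k)
  have : tensorPow M = (tensorPow B).conjTranspose * tensorPow B := by
    ext i j
    simp only [tensorPow, Matrix.of_apply, Matrix.mul_apply, Matrix.conjTranspose_apply,
      star_prod, ← Finset.prod_mul_distrib]
    rw [← Fintype.prod_sum (fun k l => star (B k l (i k)) * B k l (j k))]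
    refine Finset.prod_congr rfl fun k _ => ?_
    conv_lhs => rw [hB k]
    simp [Matrix.mul_apply]
  rw [this]
  exact Matrix.posSemidef_conjTranspose_mul_self _

theorem ts_tensorPow_trace {n : ℕ} {ι : Type*} [Fintype ι] [DecidableEq ι]
    (M : Fin n → Matrix ι ι ℂ) : (tensorPow M).trace = ∏ k, (M k).trace := by
  simp only [tensorPow, Matrix.trace, Matrix.diag, Matrix.of_apply]
  rw [← Fintype.prod_sum (fun k l => M k l l)]

theorem ts_cqPow_state {A ι : Type*} [Fintype ι] [DecidableEq ι] (W : A → Matrix ι ι ℂ)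
    (hW : ∀ a, IsState (W a)) (n : ℕ) (x : Fin n → A) : IsState (cqPow W n x) := by
  refine ⟨ts_tensorPow_psd _ fun k => (hW _).1, ?_⟩
  rw [cqPow, ts_tensorPow_trace]
  simp [(hW _).2]

open scoped Kronecker in
/-- Tensor product of two operators on concatenated index words. -/
def tsCat {m n : ℕ} {ι : Type*} (M : Matrix (Fin m → ι) (Fin m → ι) ℂ)
    (N : Matrix (Fin n → ι) (Fin n → ι) ℂ) : Matrix (Fin (m + n) → ι) (Fin (m + n) → ι) ℂ :=
  (M ⊗ₖ N).submatrix (Fin.appendEquiv m n).symm (Fin.appendEquiv m n).symm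

section
variable {m n : ℕ} {ι : Type*} [Fintype ι] [DecidableEq ι]

theorem tsCat_apply (M : Matrix (Fin m → ι) (Fin m → ι) ℂ)
    (N : Matrix (Fin n → ι) (Fin n → ι) ℂ) (i j) :
    tsCat M N i j = M (fun k => i (Fin.castAdd n k)) (fun k => j (Fin.castAdd n k)) *
      N (fun k => i (Fin.natAdd m k)) (fun k => j (Fin.natAdd m k)) := rfl

theorem tsCat_psd {M : Matrix (Fin m → ι) (Fin m → ι) ℂ} {N : Matrix (Fin n → ι) (Fin n → ι) ℂ}
    (hM : M.PosSemidef) (hN : N.PosSemidef) : (tsCat M N).PosSemidef :=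
  (hM.kronecker hN).submatrix _

theorem tsCat_one : tsCat (1 : Matrix (Fin m → ι) (Fin m → ι) ℂ)
    (1 : Matrix (Fin n → ι) (Fin n → ι) ℂ) = 1 := by
  simp [tsCat]

theorem tsCat_mul (M M' : Matrix (Fin m → ι) (Fin m → ι) ℂ)
    (N N' : Matrix (Fin n → ι) (Fin n → ι) ℂ) :
    tsCat M N * tsCat M' N' = tsCat (M * M') (N * N') := by
  simp only [tsCat]
  rw [Matrix.submatrix_mul_equiv, Matrix.mul_kronecker_mul]

theorem tsCat_trace (M : Matrix (Fin m → ι) (Fin m → ι) ℂ)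
    (N : Matrix (Fin n → ι) (Fin n → ι) ℂ) : (tsCat M N).trace = M.trace * N.trace := by
  rw [← Matrix.trace_kronecker]
  simp only [tsCat, Matrix.trace, Matrix.diag, Matrix.submatrix_apply]
  exact Equiv.sum_comp (Fin.appendEquiv m n).symm
    (fun i => (Matrix.kroneckerMap (fun x1 x2 => x1 * x2) M N) i i)

theorem tsCat_sub (M : Matrix (Fin m → ι) (Fin m → ι) ℂ)
    (N : Matrix (Fin n → ι) (Fin n → ι) ℂ) :
    1 - tsCat M N = tsCat (1 - M) 1 + tsCat M (1 - N) := by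
  rw [← tsCat_one]
  ext i j
  simp only [Matrix.sub_apply, Matrix.add_apply, tsCat_apply]
  ring

theorem tsCat_sum {J J' : Type*} [Fintype J] [Fintype J']
    (D : J → Matrix (Fin m → ι) (Fin m → ι) ℂ) (D' : J' → Matrix (Fin n → ι) (Fin n → ι) ℂ) :
    ∑ p : J × J', tsCat (D p.1) (D' p.2) = tsCat (∑ j, D j) (∑ j, D' j) := by
  ext i j
  simp only [Matrix.sum_apply, tsCat_apply]
  rw [Finset.sum_mul_sum, Fintype.sum_prod_type]

theorem tsCat_cqPow {A : Type*} (W : A → Matrix ι ι ℂ) (x : Fin m → A) (y : Fin n → A) :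
    cqPow W (m + n) (Fin.append x y) = tsCat (cqPow W m x) (cqPow W n y) := by
  ext i j
  simp [tsCat_apply, cqPow, tensorPow, Fin.prod_univ_add]

theorem ts_povm {J J' : ℕ}
    (D : Fin J → Matrix (Fin m → ι) (Fin m → ι) ℂ) (D' : Fin J' → Matrix (Fin n → ι) (Fin n → ι) ℂ)
    (h : IsPOVM D) (h' : IsPOVM D') :
    IsPOVM (fun k : Fin (J * J') =>
      tsCat (D (finProdFinEquiv.symm k).1) (D' (finProdFinEquiv.symm k).2)) := by
  refine ⟨fun k => tsCat_psd (h.1 _) (h'.1 _), ?_⟩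
  unfold loewnerLE
  rw [Equiv.sum_comp finProdFinEquiv.symm (fun p : Fin J × Fin J' => tsCat (D p.1) (D' p.2)),
    tsCat_sum, tsCat_sub]
  exact (tsCat_psd h.2 Matrix.PosSemidef.one).add
    (tsCat_psd (Matrix.posSemidef_sum _ fun j _ => h.1 j) h'.2)

theorem ts_povm_le {κ : Type*} [Fintype κ] [DecidableEq κ] {J : ℕ} {D : Fin J → Matrix κ κ ℂ}
    (h : IsPOVM D) (j : Fin J) : (1 - D j).PosSemidef := by
  have : 1 - D j = (1 - ∑ i, D i) + ∑ i ∈ Finset.univ.erase j, D i := by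
    rw [← Finset.add_sum_erase _ _ (Finset.mem_univ j)]; abel
  rw [this]
  exact Matrix.PosSemidef.add h.2 (Matrix.posSemidef_sum _ fun j _ => h.1 j)

theorem ts_err {D ρ : Matrix (Fin m → ι) (Fin m → ι) ℂ} {D' ρ' : Matrix (Fin n → ι) (Fin n → ι) ℂ}
    (hD : D.PosSemidef) (hD1 : (1 - D).PosSemidef) (hD' : (1 - D').PosSemidef)
    (hρ : IsState ρ) (hρ' : IsState ρ') :
    ((1 - tsCat D D') * tsCat ρ ρ').trace.re ≤
      ((1 - D) * ρ).trace.re + ((1 - D') * ρ').trace.re := by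
  rw [tsCat_sub, Matrix.add_mul, tsCat_mul, tsCat_mul, Matrix.trace_add, tsCat_trace, tsCat_trace,
    Matrix.one_mul, hρ'.2, mul_one, Complex.add_re, Complex.mul_re]
  have a := Complex.le_def.mp (ts_tr_mul_nonneg hD hρ.1)
  have b := Complex.le_def.mp (ts_tr_mul_nonneg hD1 hρ.1)
  have c := Complex.le_def.mp (ts_tr_mul_nonneg hD' hρ'.1)
  have d : (D * ρ).trace.re = 1 - ((1 - D) * ρ).trace.re := by
    rw [Matrix.sub_mul, Matrix.one_mul, Matrix.trace_sub, hρ.2]; simp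
  simp only [Complex.zero_re, Complex.zero_im] at a b c
  rw [← a.2, ← c.2]
  nlinarith [mul_nonneg b.1 c.1]

theorem ts_avg {J J' : ℕ} (f : Fin J → ℝ) (g : Fin J' → ℝ) (F : Fin (J * J') → ℝ) {ε ε' : ℝ}
    (hf : ∀ i, 0 ≤ f i) (hg : ∀ i, 0 ≤ g i)
    (hF : ∀ k, F k ≤ f (finProdFinEquiv.symm k).1 + g (finProdFinEquiv.symm k).2)
    (h : (J : ℝ)⁻¹ * ∑ i, f i ≤ ε) (h' : (J' : ℝ)⁻¹ * ∑ i, g i ≤ ε') :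
    ((J * J' : ℕ) : ℝ)⁻¹ * ∑ k, F k ≤ ε + ε' := by
  have h0 : 0 ≤ (J : ℝ)⁻¹ * ∑ i, f i := mul_nonneg (by positivity) (Finset.sum_nonneg fun i _ => hf i)
  have h0' : 0 ≤ (J' : ℝ)⁻¹ * ∑ i, g i := mul_nonneg (by positivity) (Finset.sum_nonneg fun i _ => hg i)
  rcases Nat.eq_zero_or_pos J with rfl | hJ
  · simp; linarith
  rcases Nat.eq_zero_or_pos J' with rfl | hJ'
  · simp; linarith
  have hs : ∑ k, F k ≤ J' * ∑ i, f i + J * ∑ i, g i := by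
    refine (Finset.sum_le_sum fun k _ => hF k).trans (le_of_eq ?_)
    rw [Equiv.sum_comp finProdFinEquiv.symm (fun p : Fin J × Fin J' => f p.1 + g p.2),
      Fintype.sum_prod_type]
    simp [Finset.sum_add_distrib, Finset.mul_sum]
  have hJr : (0 : ℝ) < J := by exact_mod_cast hJ
  have hJr' : (0 : ℝ) < J' := by exact_mod_cast hJ'
  calc ((J * J' : ℕ) : ℝ)⁻¹ * ∑ k, F k
      ≤ ((J * J' : ℕ) : ℝ)⁻¹ * (J' * ∑ i, f i + J * ∑ i, g i) :=
        mul_le_mul_of_nonneg_left hs (by positivity)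
    _ = (J : ℝ)⁻¹ * ∑ i, f i + (J' : ℝ)⁻¹ * ∑ i, g i := by push_cast; field_simp
    _ ≤ ε + ε' := add_le_add h h'

end

/-- Time-sharing (concatenation) for bidirectional broadcast codes. -/
theorem time_sharing
    {A ι₁ ι₂ : Type*} [Fintype A] [Fintype ι₁] [DecidableEq ι₁] [Fintype ι₂] [DecidableEq ι₂]
    (W1 : A → Matrix ι₁ ι₁ ℂ) (W2 : A → Matrix ι₂ ι₂ ℂ)
    (hW1 : ∀ a, IsState (W1 a)) (hW2 : ∀ a, IsState (W2 a))
    (m n J1 J2 J1' J2' : ℕ) (ε₁ ε₂ : ℝ)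
    (h1 : BroadcastCodeExists W1 W2 m J1 J2 ε₁ ε₁)
    (h2 : BroadcastCodeExists W1 W2 n J1' J2' ε₂ ε₂) :
    BroadcastCodeExists W1 W2 (m + n) (J1 * J1') (J2 * J2') (ε₁ + ε₂) (ε₁ + ε₂) := by
  obtain ⟨w, D1, D2, p1, p2, e1, e2⟩ := h1
  obtain ⟨w', D1', D2', p1', p2', e1', e2'⟩ := h2
  refine ⟨fun q => Fin.append
      (w ((finProdFinEquiv.symm q.1).1, (finProdFinEquiv.symm q.2).1))
      (w' ((finProdFinEquiv.symm q.1).2, (finProdFinEquiv.symm q.2).2)),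
    fun b a => tsCat (D1 (finProdFinEquiv.symm b).1 (finProdFinEquiv.symm a).1)
      (D1' (finProdFinEquiv.symm b).2 (finProdFinEquiv.symm a).2),
    fun a b => tsCat (D2 (finProdFinEquiv.symm a).1 (finProdFinEquiv.symm b).1)
      (D2' (finProdFinEquiv.symm a).2 (finProdFinEquiv.symm b).2),
    fun b => ts_povm _ _ (p1 _) (p1' _), fun a => ts_povm _ _ (p2 _) (p2' _), fun b => ?_,
    fun a => ?_⟩
  · refine ts_avg _ _ _ (fun i => ?_) (fun i => ?_) (fun k => ?_)
      (e1 (finProdFinEquiv.symm b).1) (e1' (finProdFinEquiv.symm b).2)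
    · exact (Complex.le_def.mp (ts_tr_mul_nonneg (ts_povm_le (p1 _) _)
        (ts_cqPow_state W1 hW1 _ _).1)).1
    · exact (Complex.le_def.mp (ts_tr_mul_nonneg (ts_povm_le (p1' _) _)
        (ts_cqPow_state W1 hW1 _ _).1)).1
    · rw [tsCat_cqPow]
      exact ts_err ((p1 _).1 _) (ts_povm_le (p1 _) _) (ts_povm_le (p1' _) _)
        (ts_cqPow_state W1 hW1 _ _) (ts_cqPow_state W1 hW1 _ _)
  · refine ts_avg _ _ _ (fun i => ?_) (fun i => ?_) (fun k => ?_)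
      (e2 (finProdFinEquiv.symm a).1) (e2' (finProdFinEquiv.symm a).2)
    · exact (Complex.le_def.mp (ts_tr_mul_nonneg (ts_povm_le (p2 _) _)
        (ts_cqPow_state W2 hW2 _ _).1)).1
    · exact (Complex.le_def.mp (ts_tr_mul_nonneg (ts_povm_le (p2' _) _)
        (ts_cqPow_state W2 hW2 _ _).1)).1
    · rw [tsCat_cqPow]
      exact ts_err ((p2 _).1 _) (ts_povm_le (p2 _) _) (ts_povm_le (p2' _) _)
        (ts_cqPow_state W2 hW2 _ _) (ts_cqPow_state W2 hW2 _ _)
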